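/- arXiv:1807.04963 — 2 statements merged into one kernel-verified Lean document; each statement's English description precedes it below -/
import Mathlib

section
/- Let n ≥ 1. For every x ∈ ℝⁿ there exists a maximal chain ∅ ⊊ S₁ ⊊ S₂ ⊊ ⋯ ⊊ Sₙ ⊊ [n+1] of nonempty proper subsets of [n+1] and nonnegative real numbers a₁,…,aₙ such that x = a₁ u_{S₁} + ⋯ + aₙ u_{Sₙ}. In other words, the cones Cone(u_{S₁},…,u_{Sₙ}) over all maximal chains cover ℝⁿ (completeness of the permutohedral fan). -/
/-- The standard basis vector `e_s` of `ℤⁿ` for `s ∈ [n+1]`, with the convention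
that the vector corresponding to the last element `n+1` is zero. -/
def permEps (n : ℕ) (s : Fin (n + 1)) : Fin n → ℤ :=
  fun i => if (i : ℕ) = (s : ℕ) then 1 else 0

/-- The ray generator `u_S` of the permutohedral fan, for `∅ ⊊ S ⊊ [n+1]`. -/
def permU (n : ℕ) (S : Finset (Fin (n + 1))) : Fin n → ℤ :=
  if Fin.last n ∈ S then -∑ s ∈ Sᶜ, permEps n s else ∑ s ∈ S, permEps n s

/-!
View `x` as a function `y` on `[n+1]` vanishing at `n+1`. Since `u_S` is the indicator of `S` minus
its value at `n+1`, the combination `∑ aₚ u_{Sₚ}` equals `y` as soon as `∑ aₚ 1_{Sₚ}` agrees with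
`y` up to an additive constant. List `[n+1]` by decreasing values of `y` and let `Sₚ` consist of the
first `p` elements: the gaps between consecutive values are nonnegative, and they are the required
coefficients because the gaps from any element down to the last one telescope.
-/

theorem exists_perm_antitone_comp {n : ℕ} {α : Type*} [LinearOrder α] (f : Fin n → α) :
    ∃ σ : Equiv.Perm (Fin n), Antitone (f ∘ σ) :=
  ⟨Tuple.sort (OrderDual.toDual ∘ f), Tuple.monotone_sort (OrderDual.toDual ∘ f)⟩

theorem sum_filter_le_castSucc_sub_succ {n : ℕ} {G : Type*} [AddCommGroup G]
    (z : Fin (n + 1) → G) (j : Fin (n + 1)) :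
    ∑ p with j ≤ Fin.castSucc p, (z p.castSucc - z p.succ) = z j - z (Fin.last n) := by
  induction j using Fin.reverseInduction with
  | last => simp
  | cast i ih =>
    simp only [Fin.succ_le_castSucc_iff, Finset.filter_lt_eq_Ioi] at ih
    simp only [Fin.castSucc_le_castSucc_iff, Finset.filter_le_eq_Ici]
    rw [← Finset.Ioi_insert, Finset.sum_insert Finset.notMem_Ioi_self, ih, sub_add_sub_cancel]

section permEps

variable {n : ℕ}

theorem permEps_apply (s : Fin (n + 1)) (i : Fin n) :
    permEps n s i = if i.castSucc = s then 1 else 0 := by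
  simp only [permEps, Fin.ext_iff, Fin.val_castSucc]

theorem sum_permEps_apply (T : Finset (Fin (n + 1))) (i : Fin n) :
    (∑ s ∈ T, permEps n s) i = if i.castSucc ∈ T then 1 else 0 := by
  simp only [Finset.sum_apply, permEps_apply, Finset.sum_ite_eq]

theorem permU_apply (S : Finset (Fin (n + 1))) (i : Fin n) :
    permU n S i = (if i.castSucc ∈ S then 1 else 0) - if Fin.last n ∈ S then 1 else 0 := by
  by_cases hlast : Fin.last n ∈ S <;> by_cases hi : i.castSucc ∈ S <;>
    simp [permU, sum_permEps_apply, hlast, hi, -Finset.sum_apply]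

end permEps

/-- The maximal chain of nonempty proper subsets of `[n+1]` obtained by adjoining the elements in
the order `σ 0, σ 1, …`. The index `p` is zero-based: `permChain σ p = {σ 0, …, σ p}` plays the role
of `S_{p+1}`. -/
def permChain {n : ℕ} (σ : Equiv.Perm (Fin (n + 1))) (p : Fin n) : Finset (Fin (n + 1)) :=
  (Finset.Iic p.castSucc).map σ.toEmbedding

section permChain

variable {n : ℕ} (σ : Equiv.Perm (Fin (n + 1)))

theorem mem_permChain {p : Fin n} {k : Fin (n + 1)} :
    k ∈ permChain σ p ↔ σ.symm k ≤ p.castSucc := by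
  rw [permChain, Finset.mem_map_equiv, Finset.mem_Iic]

theorem permChain_nonempty (p : Fin n) : (permChain σ p).Nonempty :=
  Finset.nonempty_Iic.map

theorem permChain_ne_univ (p : Fin n) : permChain σ p ≠ Finset.univ := by
  have last_notMem : σ (Fin.last n) ∉ permChain σ p := by
    rw [mem_permChain, Equiv.symm_apply_apply, not_le]
    exact Fin.castSucc_lt_last p
  exact fun h ↦ last_notMem (h ▸ Finset.mem_univ _)

theorem permChain_strictMono : StrictMono (permChain σ) := fun _ _ hpq ↦
  Finset.map_ssubset_map.mpr <| Finset.Iic_ssubset_Iic.mpr <| Fin.castSucc_lt_castSucc_iff.mpr hpq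

theorem sum_permU_permChain_zsmul {G : Type*} [AddCommGroup G] (y : Fin (n + 1) → G) (i : Fin n) :
    ∑ p, permU n (permChain σ p) i • (y (σ p.castSucc) - y (σ p.succ)) =
      y i.castSucc - y (Fin.last n) := by
  have telescope (k : Fin (n + 1)) :
      ∑ p with k ∈ permChain σ p, (y (σ p.castSucc) - y (σ p.succ)) =
        y k - y (σ (Fin.last n)) := by
    simpa only [mem_permChain, Function.comp_apply, Equiv.apply_symm_apply] using
      sum_filter_le_castSucc_sub_succ (y ∘ σ) (σ.symm k)
  simp only [permU_apply, sub_smul, ite_smul, one_smul, zero_smul, Finset.sum_sub_distrib,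
    ← Finset.sum_filter, telescope, sub_sub_sub_cancel_right]

end permChain

/-- For `G = ℤ` this says that every lattice point is a natural-number combination of the ray
generators of a single maximal cone. -/
theorem permutohedral_fan_complete_general {G : Type*} [AddCommGroup G] [LinearOrder G]
    [IsOrderedAddMonoid G] (n : ℕ) (x : Fin n → G) :
    ∃ S : Fin n → Finset (Fin (n + 1)),
      ((∀ p, (S p).Nonempty) ∧ (∀ p, S p ≠ Finset.univ) ∧
        (∀ p q, p < q → S p ⊂ S q)) ∧
      ∃ a : Fin n → G, (∀ p, 0 ≤ a p) ∧
        ∀ i, x i = ∑ p, permU n (S p) i • a p := by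
  let y : Fin (n + 1) → G := Fin.snoc x 0
  obtain ⟨σ, hσ⟩ := exists_perm_antitone_comp y
  refine ⟨permChain σ,
    ⟨permChain_nonempty σ, permChain_ne_univ σ, fun _ _ hpq ↦ permChain_strictMono σ hpq⟩,
    fun p ↦ y (σ p.castSucc) - y (σ p.succ),
    fun p ↦ sub_nonneg.mpr (hσ p.castSucc_le_succ), fun i ↦ ?_⟩
  rw [sum_permU_permChain_zsmul σ y]
  simp only [y, Fin.snoc_castSucc, Fin.snoc_last, sub_zero]

/-- Completeness of the permutohedral fan: every `x ∈ ℝⁿ` is a nonnegative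
combination of `u_{S₁}, …, u_{Sₙ}` for some maximal chain
`∅ ⊊ S₁ ⊊ ⋯ ⊊ Sₙ ⊊ [n+1]` of nonempty proper subsets of `[n+1]`. -/
theorem permutohedral_fan_complete (n : ℕ) (hn : 1 ≤ n) (x : Fin n → ℝ) :
    ∃ S : Fin n → Finset (Fin (n + 1)),
      ((∀ p, (S p).Nonempty) ∧ (∀ p, S p ≠ Finset.univ) ∧
        (∀ p q, p < q → S p ⊂ S q)) ∧
      ∃ a : Fin n → ℝ, (∀ p, 0 ≤ a p) ∧
        ∀ i, x i = ∑ p, a p * (permU n (S p) i : ℝ) := by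
  simpa only [zsmul_eq_mul, mul_comm] using permutohedral_fan_complete_general n x
end

section
/- Fix flag Bott data n₁,…,n_m and matrices A^{(j)}_ℓ as in the context. For every x ∈ ℝⁿ there exist maximal chains S^ℓ_• : ∅ ⊊ S^ℓ_1 ⊊ ⋯ ⊊ S^ℓ_{n_ℓ} ⊊ [n_ℓ+1] for 1 ≤ ℓ ≤ m, and nonnegative real numbers a_{ℓ,p} (1 ≤ p ≤ n_ℓ, 1 ≤ ℓ ≤ m), such that x = Σ_{ℓ=1}^m Σ_{p=1}^{n_ℓ} a_{ℓ,p} u^ℓ_{S^ℓ_p}. In other words, the cones generated by the vectors associated to tuples of maximal chains cover ℝⁿ (completeness of the fan of the generic torus orbit closure in the flag Bott manifold). -/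
/-- Standard basis vector `ε_{p,k}` of `ℤⁿ`, `n = n₁ + ⋯ + n_m`, whose coordinates are
indexed by pairs `(q, i)` with `q ∈ [m]`, `i ∈ [n_q]`; by convention
`ε_{p, n_p+1} = 0`. -/
def fbEps (m : ℕ) (n : Fin m → ℕ) (p : Fin m) (k : Fin (n p + 1)) :
    (Σ q : Fin m, Fin (n q)) → ℤ :=
  fun x => if x.1 = p ∧ (x.2 : ℕ) = (k : ℕ) then 1 else 0

/-- The ray generator `u^ℓ_S ∈ ℤⁿ` of the fan of the generic torus orbit closure in
the flag Bott manifold determined by the integer matrices `A^{(j)}_ℓ`, for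
`∅ ⊊ S ⊊ [n_ℓ+1]` and `d = |[n_ℓ+1] ∖ S|`. -/
def fbU (m : ℕ) (n : Fin m → ℕ)
    (A : ∀ j l : Fin m, Matrix (Fin (n j + 1)) (Fin (n l + 1)) ℤ)
    (l : Fin m) (S : Finset (Fin (n l + 1))) : (Σ q : Fin m, Fin (n q)) → ℤ :=
  if Fin.last (n l) ∈ S then
    -(∑ s ∈ Sᶜ, fbEps m n l s) +
      ∑ p : Fin m, ∑ k : Fin (n p + 1),
        (if l < p then
            ∑ z ∈ Finset.univ.filter (fun z : Fin (n l + 1) => (z : ℕ) < Sᶜ.card),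
              A p l k z
          else 0) • fbEps m n p k
  else
    (∑ s ∈ S, fbEps m n l s) -
      ∑ p : Fin m, ∑ k : Fin (n p + 1),
        (if l < p then
            ∑ z ∈ Finset.univ.filter (fun z : Fin (n l + 1) => Sᶜ.card ≤ (z : ℕ)),
              A p l k z
          else 0) • fbEps m n p k

/-!
The vector `u^ℓ_S` vanishes on the coordinate blocks before `ℓ`, restricts on block `ℓ` to the
indicator of `S` minus its value at `n_ℓ + 1`, and involves the matrices `A` only on later blocks.
So the blocks can be solved in increasing order, each one after subtracting what the earlier ones
contribute to it, and it remains to treat a single block. This is the completeness of the braid fan: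
extend the vector by a last coordinate `0`, sort its coordinates in decreasing order, and take the
initial segments of that order with the consecutive differences as coefficients. Only differences
of coordinates are used, so the real numbers may be replaced by any linearly ordered abelian group;
over the integers this says that lattice points are nonnegative integral combinations.
-/

theorem exists_sum_eq_of_blockTriangular {ι κ G : Type*} [Fintype ι] [LinearOrder ι]
    [AddCommGroup G] (b : κ → ι) (K : ι → Set (κ → G))
    (vanish : ∀ l, ∀ v ∈ K l, ∀ i, b i < l → v i = 0)
    (prescribe : ∀ l, ∀ y : κ → G, ∃ v ∈ K l, ∀ i, b i = l → v i = y i) (x : κ → G) :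
    ∃ v : ι → κ → G, (∀ l, v l ∈ K l) ∧ ∑ l, v l = x := by
  suffices partial_solution : ∀ s : Finset ι, ∃ v : ι → κ → G, (∀ l, v l ∈ K l) ∧
      ∀ i, b i ∈ s → ∑ l ∈ s, v l i = x i by
    obtain ⟨v, hv, hsum⟩ := partial_solution Finset.univ
    exact ⟨v, hv, funext fun i => by simpa using hsum i (Finset.mem_univ _)⟩
  intro s
  induction s using Finset.induction_on_max with
  | empty =>
    choose v hv _ using fun l => prescribe l 0
    exact ⟨v, hv, by simp⟩
  | insert l s hlt ih =>
    obtain ⟨v, hv, hsum⟩ := ih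
    obtain ⟨u, hu, hul⟩ := prescribe l (x - ∑ q ∈ s, v q)
    have hl : l ∉ s := fun h => (hlt l h).false
    have sum_update (i : κ) :
        ∑ q ∈ insert l s, Function.update v l u q i = u i + ∑ q ∈ s, v q i := by
      rw [Finset.sum_insert hl, Function.update_self]
      congr 1
      exact Finset.sum_congr rfl fun q hq => by rw [Function.update_of_ne (hlt q hq).ne]
    refine ⟨Function.update v l u, fun q => ?_, fun i hi => ?_⟩
    · obtain rfl | hq := eq_or_ne q l
      · simpa using hu
      · simpa [hq] using hv q
    · rw [sum_update]
      obtain hi | hi := Finset.mem_insert.mp hi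
      · simp [hul i hi]
      · rw [vanish l u hu i (hlt _ hi), hsum i hi, zero_add]

section MaximalChain

/-- A maximal chain `∅ ⊊ S 0 ⊊ ⋯ ⊊ S (N - 1) ⊊ [N + 1]` of nonempty proper subsets; maximality is
forced by the number `N` of its members. -/
structure IsMaximalProperChain {N : ℕ} (S : Fin N → Finset (Fin (N + 1))) : Prop where
  nonempty : ∀ p, (S p).Nonempty
  ne_univ : ∀ p, S p ≠ Finset.univ
  strictMono : StrictMono S

/-- The chain of initial segments `{σ 0, …, σ p}` of the ordering `σ` of `[N + 1]`. -/
def initialSegment {N : ℕ} (σ : Equiv.Perm (Fin (N + 1))) (p : Fin N) : Finset (Fin (N + 1)) :=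
  (Finset.Iic p.castSucc).map σ.toEmbedding

theorem mem_initialSegment {N : ℕ} {σ : Equiv.Perm (Fin (N + 1))} {p : Fin N}
    {i : Fin (N + 1)} : i ∈ initialSegment σ p ↔ σ.symm i ≤ p.castSucc := by
  simp [initialSegment, Finset.mem_map_equiv]

theorem isMaximalProperChain_initialSegment {N : ℕ} (σ : Equiv.Perm (Fin (N + 1))) :
    IsMaximalProperChain (initialSegment σ) where
  nonempty p := Finset.nonempty_Iic.map
  ne_univ p h := by
    have last_mem : σ (Fin.last N) ∈ initialSegment σ p := h ▸ Finset.mem_univ _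
    simp [mem_initialSegment, (Fin.castSucc_lt_last p).not_ge] at last_mem
  strictMono p q hpq :=
    Finset.map_ssubset_map.mpr <| Finset.Iic_ssubset_Iic.mpr <| Fin.castSucc_lt_castSucc_iff.mpr hpq

theorem sum_ite_le_castSucc_sub_succ {G : Type*} [AddCommGroup G] {N : ℕ} (w : Fin (N + 1) → G)
    (k : Fin (N + 1)) :
    ∑ p : Fin N, (if k ≤ p.castSucc then w p.castSucc - w p.succ else 0) =
      w k - w (Fin.last N) := by
  induction N with
  | zero => simp [Fin.fin_one_eq_zero k]
  | succ N ih =>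
    cases k using Fin.lastCases with
    | last => simp [(Fin.castSucc_lt_last _).not_ge]
    | cast k =>
      have shorter := ih (fun i => w i.castSucc) k
      rw [Fin.sum_univ_castSucc]
      simp only [Fin.castSucc_le_castSucc_iff, Fin.succ_castSucc, Fin.le_last, if_true,
        Fin.succ_last, shorter, sub_add_sub_cancel]

variable {G : Type*} [AddCommGroup G] [LinearOrder G] [IsOrderedAddMonoid G]

theorem exists_isMaximalProperChain_eq_add_sum {N : ℕ} (z : Fin (N + 1) → G) :
    ∃ S : Fin N → Finset (Fin (N + 1)), IsMaximalProperChain S ∧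
      ∃ a : Fin N → G, (∀ p, 0 ≤ a p) ∧
        ∃ c, ∀ i, z i = c + ∑ p, if i ∈ S p then a p else 0 := by
  let σ := Tuple.sort (OrderDual.toDual ∘ z)
  have antitone_sorted : Antitone (z ∘ σ) := Tuple.monotone_sort (OrderDual.toDual ∘ z)
  refine ⟨initialSegment σ, isMaximalProperChain_initialSegment σ,
    fun p => z (σ p.castSucc) - z (σ p.succ),
    fun p => sub_nonneg.mpr (antitone_sorted p.castSucc_lt_succ.le), z (σ (Fin.last N)),
    fun i => ?_⟩
  have telescoped := sum_ite_le_castSucc_sub_succ (z ∘ σ) (σ.symm i)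
  simp only [Function.comp_apply, Equiv.apply_symm_apply] at telescoped
  simp only [mem_initialSegment, telescoped, add_sub_cancel]

theorem exists_isMaximalProperChain_eq_sum_sub_last {N : ℕ} (y : Fin N → G) :
    ∃ S : Fin N → Finset (Fin (N + 1)), IsMaximalProperChain S ∧
      ∃ a : Fin N → G, (∀ p, 0 ≤ a p) ∧ ∀ j, y j = ∑ p,
        ((if j.castSucc ∈ S p then 1 else 0) - (if Fin.last N ∈ S p then 1 else 0) : ℤ) • a p := by
  obtain ⟨S, hS, a, ha, c, hc⟩ :=
    exists_isMaximalProperChain_eq_add_sum (Fin.snoc y 0 : Fin (N + 1) → G)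
  refine ⟨S, hS, a, ha, fun j => ?_⟩
  have last_coord := hc (Fin.last N)
  have coord := hc j.castSucc
  rw [Fin.snoc_last] at last_coord
  rw [Fin.snoc_castSucc] at coord
  simp only [sub_smul, ite_smul, one_smul, zero_smul, Finset.sum_sub_distrib]
  rw [coord, eq_neg_of_add_eq_zero_left last_coord.symm, neg_add_eq_sub]

end MaximalChain

section FlagBott

variable {m : ℕ} {n : Fin m → ℕ}

theorem fbEps_apply_of_ne {p : Fin m} {i : Σ q : Fin m, Fin (n q)} (hi : i.1 ≠ p)
    (k : Fin (n p + 1)) : fbEps m n p k i = 0 := by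
  simp [fbEps, hi]

theorem fbEps_apply_self {l : Fin m} (k : Fin (n l + 1)) (j : Fin (n l)) :
    fbEps m n l k ⟨l, j⟩ = if j.castSucc = k then 1 else 0 := by
  simp [fbEps, Fin.ext_iff]

variable (A : ∀ j l : Fin m, Matrix (Fin (n j + 1)) (Fin (n l + 1)) ℤ)

theorem fbU_apply_of_le {l : Fin m} (S : Finset (Fin (n l + 1))) {i : Σ q : Fin m, Fin (n q)}
    (hi : i.1 ≤ l) :
    fbU m n A l S i =
      if Fin.last (n l) ∈ S then -∑ s ∈ Sᶜ, fbEps m n l s i else ∑ s ∈ S, fbEps m n l s i := by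
  have correction_eq_zero (c : ∀ p : Fin m, Fin (n p + 1) → ℤ) :
      ∑ p, ∑ k, (if l < p then c p k else 0) * fbEps m n p k i = 0 := by
    refine Finset.sum_eq_zero fun p _ => Finset.sum_eq_zero fun k _ => ?_
    split_ifs with hp
    · rw [fbEps_apply_of_ne (hi.trans_lt hp).ne, mul_zero]
    · rw [zero_mul]
  unfold fbU
  split_ifs <;>
    simp only [Finset.sum_apply, Pi.add_apply, Pi.neg_apply, Pi.sub_apply, Pi.smul_apply,
      smul_eq_mul, correction_eq_zero, add_zero, sub_zero]

theorem fbU_apply_of_lt {l : Fin m} (S : Finset (Fin (n l + 1))) {i : Σ q : Fin m, Fin (n q)}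
    (hi : i.1 < l) : fbU m n A l S i = 0 := by
  simp [fbU_apply_of_le A S hi.le, fbEps_apply_of_ne hi.ne]

theorem fbU_apply_self {l : Fin m} (S : Finset (Fin (n l + 1))) (j : Fin (n l)) :
    fbU m n A l S ⟨l, j⟩ =
      (if j.castSucc ∈ S then 1 else 0) - (if Fin.last (n l) ∈ S then 1 else 0) := by
  rw [fbU_apply_of_le A S le_rfl]
  simp only [fbEps_apply_self, Finset.sum_ite_eq, Finset.mem_compl]
  split_ifs <;> simp_all

variable (G : Type*) [AddCommGroup G] [LinearOrder G]

/-- The union, over the maximal chains in `[n_l + 1]`, of the cones generated by the vectors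
`u^l_S` of the chain. Vectors and coefficients lie in an arbitrary ordered group `G`, on which the
integer coordinates of `u^l_S` act by `zsmul`. -/
def fbChainCones (l : Fin m) : Set ((Σ q : Fin m, Fin (n q)) → G) :=
  {v | ∃ S : Fin (n l) → Finset (Fin (n l + 1)), IsMaximalProperChain S ∧
    ∃ a : Fin (n l) → G, (∀ p, 0 ≤ a p) ∧ ∀ i, v i = ∑ p, fbU m n A l (S p) i • a p}

variable {G}

theorem apply_eq_zero_of_mem_fbChainCones {l : Fin m} {v : (Σ q : Fin m, Fin (n q)) → G}
    (hv : v ∈ fbChainCones A G l) {i : Σ q : Fin m, Fin (n q)} (hi : i.1 < l) : v i = 0 := by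
  obtain ⟨S, -, a, -, hva⟩ := hv
  simp [hva, fbU_apply_of_lt A _ hi]

variable [IsOrderedAddMonoid G]

theorem exists_mem_fbChainCones_eq_on_block (l : Fin m) (y : (Σ q : Fin m, Fin (n q)) → G) :
    ∃ v ∈ fbChainCones A G l, ∀ i, i.1 = l → v i = y i := by
  obtain ⟨S, hS, a, ha, hya⟩ := exists_isMaximalProperChain_eq_sum_sub_last fun j => y ⟨l, j⟩
  refine ⟨_, ⟨S, hS, a, ha, fun _ => rfl⟩, ?_⟩
  rintro ⟨_, j⟩ rfl
  simp only [fbU_apply_self, hya]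

theorem fbU_fan_complete_general (x : (Σ q : Fin m, Fin (n q)) → G) :
    ∃ S : ∀ l : Fin m, Fin (n l) → Finset (Fin (n l + 1)), (∀ l, IsMaximalProperChain (S l)) ∧
      ∃ a : ∀ l : Fin m, Fin (n l) → G, (∀ l p, 0 ≤ a l p) ∧
        ∀ i, x i = ∑ l : Fin m, ∑ p : Fin (n l), fbU m n A l (S l p) i • a l p := by
  obtain ⟨v, hv, hvx⟩ := exists_sum_eq_of_blockTriangular Sigma.fst (fbChainCones A G)
    (fun _ _ hv _ => apply_eq_zero_of_mem_fbChainCones A hv)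
    (exists_mem_fbChainCones_eq_on_block A) x
  choose S hS a ha hva using hv
  exact ⟨S, hS, a, ha, fun i => by simp only [← hvx, Finset.sum_apply, hva]⟩

end FlagBott

/-- Completeness of the fan of the generic torus orbit closure in a flag Bott
manifold: every `x ∈ ℝⁿ` is a nonnegative combination of the vectors `u^ℓ_{S^ℓ_p}`
associated to some `m`-tuple of maximal chains
`∅ ⊊ S^ℓ_1 ⊊ ⋯ ⊊ S^ℓ_{n_ℓ} ⊊ [n_ℓ+1]`. -/
theorem fbU_fan_complete (m : ℕ) (hm : 1 ≤ m)
    (n : Fin m → ℕ) (hn : ∀ l, 1 ≤ n l)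
    (A : ∀ j l : Fin m, Matrix (Fin (n j + 1)) (Fin (n l + 1)) ℤ)
    (x : (Σ q : Fin m, Fin (n q)) → ℝ) :
    ∃ S : ∀ l : Fin m, Fin (n l) → Finset (Fin (n l + 1)),
      ((∀ l p, (S l p).Nonempty) ∧ (∀ l p, S l p ≠ Finset.univ) ∧
        (∀ l, ∀ p q, p < q → S l p ⊂ S l q)) ∧
      ∃ a : ∀ l : Fin m, Fin (n l) → ℝ, (∀ l p, 0 ≤ a l p) ∧
        ∀ i, x i = ∑ l : Fin m, ∑ p : Fin (n l), a l p * (fbU m n A l (S l p) i : ℝ) := by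
  obtain ⟨S, hS, a, ha, hx⟩ := fbU_fan_complete_general A x
  exact ⟨S, ⟨fun l => (hS l).nonempty, fun l => (hS l).ne_univ, fun l _ _ h => (hS l).strictMono h⟩,
    a, ha, by simpa only [zsmul_eq_mul, mul_comm] using hx⟩
end
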